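/- Suppose 𝒫 = ℱ ∘ ℛ and 𝒮 = (𝒱 ∘ ℛ)⁻¹(E), where ℛ(η) = (π_{2,1}#η, …, π_{2,n}#η) is the tuple of one-dimensional marginal distributions of the second (reinsured) component of η, ℱ is a functional on n-tuples of probability measures on ℝ, E is a closed subset of a topological space and 𝒱 is continuous on the image of ℛ. Let η* ∈ 𝒮 minimize 𝒫 over 𝒮, set νᵢ* = π_{2,i}#η*, and suppose each marginal cdf F_{μᵢ} of μ is continuous. Define Rᵢ = F_{νᵢ*}⁻¹ ∘ F_{μᵢ} and let ϑ be the pushforward of μ under the map x ↦ (x, R₁(x₁), …, Rₙ(xₙ)). Then ϑ is a reinsurance treaty (in particular 0 ≤ Rᵢ(xᵢ) ≤ xᵢ), ℛ(ϑ) = ℛ(η*), ϑ ∈ 𝒮, and 𝒫(ϑ) = 𝒫(η*); hence a deterministic optimal reinsurance contract exists whose components are the monotone rearrangements Rᵢ = F_{νᵢ*}⁻¹ ∘ F_{μᵢ}. -/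

import Mathlib

open MeasureTheory Filter Topology Set

noncomputable section

abbrev Vec (n : ℕ) : Type := Fin n → ℝ
abbrev Pt (n : ℕ) : Type := Vec n × Vec n

def treatySet (n : ℕ) : Set (Pt n) := {p | ∀ i, 0 ≤ p.2 i ∧ p.2 i ≤ p.1 i}

def IsTreaty (n : ℕ) (μ : Measure (Vec n)) (η : Measure (Pt n)) : Prop :=
  IsProbabilityMeasure η ∧ η.map Prod.fst = μ ∧ η (treatySet n) = 1

def cdfR (ξ : Measure ℝ) (s : ℝ) : ℝ := (ξ (Iic s)).toReal

def qf (ξ : Measure ℝ) (p : ℝ) : ℝ := sInf {s : ℝ | p ≤ cdfR ξ s}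

/-!
If the cdf `F_α` of a probability measure `α` on the line is continuous, then it transports `α` to
the uniform law on `(0, 1)`, and a quantile function `F_β⁻¹` transports the uniform law to `β`.
Hence `F_β⁻¹ ∘ F_α` transports `α` to `β`. If moreover `0 ≤ Y ≤ X` almost surely, where `X` has law
`α` and `Y` has law `β`, then `F_α ≤ F_β`, so that `0 ≤ F_β⁻¹ (F_α s) ≤ s` for every `s ≥ 0`.
Rearranging each coordinate of a treaty in this way therefore gives a deterministic treaty with the
same marginals of the reinsured components, and neither the objective nor the constraint can tell
the two apart.
-/

section Cdf

lemma cdfR_map_le_of_ae_le {Ω : Type*} [MeasurableSpace Ω] {P : Measure Ω} [IsFiniteMeasure P]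
    {X Y : Ω → ℝ} (hX : AEMeasurable X P) (hY : AEMeasurable Y P) (hYX : Y ≤ᵐ[P] X) (s : ℝ) :
    cdfR (P.map X) s ≤ cdfR (P.map Y) s := by
  rw [cdfR, cdfR, Measure.map_apply_of_aemeasurable hX measurableSet_Iic,
    Measure.map_apply_of_aemeasurable hY measurableSet_Iic]
  refine ENNReal.toReal_mono (measure_ne_top _ _) (measure_mono_ae ?_)
  filter_upwards [hYX] with ω hω hXs using hω.trans hXs

variable (ξ : Measure ℝ) {t : ℝ}

lemma cdfR_nonneg (s : ℝ) : 0 ≤ cdfR ξ s :=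
  ENNReal.toReal_nonneg

variable {ξ} in
lemma cdfR_eq_zero_of_neg (hξ : ξ (Iio 0) = 0) (ht : t < 0) : cdfR ξ t = 0 := by
  rw [cdfR, measure_mono_null (Iic_subset_Iio.2 ht) hξ, ENNReal.toReal_zero]

variable [IsProbabilityMeasure ξ]

lemma cdfR_eq_cdf : cdfR ξ = ProbabilityTheory.cdf ξ :=
  funext fun s ↦ (ProbabilityTheory.cdf_eq_real ξ s).symm

lemma monotone_cdfR : Monotone (cdfR ξ) :=
  cdfR_eq_cdf ξ ▸ ProbabilityTheory.monotone_cdf ξ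

lemma cdfR_le_one (s : ℝ) : cdfR ξ s ≤ 1 :=
  cdfR_eq_cdf ξ ▸ ProbabilityTheory.cdf_le_one ξ s

lemma ofReal_cdfR (s : ℝ) : ENNReal.ofReal (cdfR ξ s) = ξ (Iic s) :=
  cdfR_eq_cdf ξ ▸ ProbabilityTheory.ofReal_cdf ξ s

lemma exists_cdfR_lt (ht : 0 < t) : ∃ s, cdfR ξ s < t :=
  cdfR_eq_cdf ξ ▸ ((ProbabilityTheory.tendsto_cdf_atBot ξ).eventually_lt_const ht).exists

lemma exists_lt_cdfR (ht : t < 1) : ∃ s, t < cdfR ξ s :=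
  cdfR_eq_cdf ξ ▸ ((ProbabilityTheory.tendsto_cdf_atTop ξ).eventually_const_lt ht).exists

lemma tendsto_cdfR_nhdsGT (s : ℝ) : Tendsto (cdfR ξ) (𝓝[>] s) (𝓝 (cdfR ξ s)) := by
  rw [cdfR_eq_cdf]
  exact ((ProbabilityTheory.cdf ξ).right_continuous s).mono Ioi_subset_Ici_self

variable {ξ}

lemma exists_cdfR_eq (hξ : Continuous (cdfR ξ)) (ht₀ : 0 < t) (ht₁ : t < 1) :
    ∃ s, cdfR ξ s = t :=
  mem_range_of_exists_le_of_exists_ge hξ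
    ((exists_cdfR_lt ξ ht₀).imp fun _ ↦ le_of_lt) ((exists_lt_cdfR ξ ht₁).imp fun _ ↦ le_of_lt)

lemma measure_cdfR_lt_le (hξ : Continuous (cdfR ξ)) (t : ℝ) :
    ξ {s | cdfR ξ s < t} ≤ ENNReal.ofReal t := by
  rcases le_or_gt t 0 with ht₀ | ht₀
  · have hempty : {s | cdfR ξ s < t} = ∅ :=
      eq_empty_of_forall_notMem fun s hs ↦ (ht₀.trans (cdfR_nonneg ξ s)).not_gt hs
    simp [hempty]
  rcases le_or_gt 1 t with ht₁ | ht₁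
  · exact prob_le_one.trans (ENNReal.one_le_ofReal.2 ht₁)
  obtain ⟨a, rfl⟩ := exists_cdfR_eq hξ ht₀ ht₁
  rw [ofReal_cdfR]
  exact measure_mono fun s hs ↦ ((monotone_cdfR ξ).reflect_lt hs).le

lemma le_measure_cdfR_le (hξ : Continuous (cdfR ξ)) (t : ℝ) :
    ENNReal.ofReal (min t 1) ≤ ξ {s | cdfR ξ s ≤ t} := by
  rcases le_or_gt t 0 with ht₀ | ht₀
  · simp [ENNReal.ofReal_of_nonpos (min_le_of_left_le ht₀)]
  rcases le_or_gt 1 t with ht₁ | ht₁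
  · have huniv : {s | cdfR ξ s ≤ t} = univ :=
      eq_univ_of_forall fun s ↦ (cdfR_le_one ξ s).trans ht₁
    simp [huniv, ht₁]
  obtain ⟨a, rfl⟩ := exists_cdfR_eq hξ ht₀ ht₁
  rw [min_eq_left ht₁.le, ofReal_cdfR]
  exact measure_mono fun s hs ↦ monotone_cdfR ξ hs

lemma measure_cdfR_le (hξ : Continuous (cdfR ξ)) (t : ℝ) :
    ξ {s | cdfR ξ s ≤ t} = ENNReal.ofReal (min t 1) := by
  refine le_antisymm ?_ (le_measure_cdfR_le hξ t)
  rw [ENNReal.ofReal_min, ENNReal.ofReal_one]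
  refine le_min ?_ prob_le_one
  have hlim : Tendsto ENNReal.ofReal (𝓝[>] t) (𝓝 (ENNReal.ofReal t)) :=
    ENNReal.continuous_ofReal.continuousAt.mono_left nhdsWithin_le_nhds
  refine ge_of_tendsto hlim ?_
  filter_upwards [self_mem_nhdsWithin] with u hu
  have hsub : {s | cdfR ξ s ≤ t} ⊆ {s | cdfR ξ s < u} :=
    ofPred_subset_ofPred.2 fun _ hs ↦ lt_of_le_of_lt hs hu
  exact (measure_mono hsub).trans (measure_cdfR_lt_le hξ u)

lemma volume_restrict_Ioo_zero_one_Iic (t : ℝ) :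
    volume.restrict (Ioo 0 1) (Iic t) = ENNReal.ofReal (min t 1) := by
  rw [Measure.restrict_congr_set Ioo_ae_eq_Ioc, Measure.restrict_apply measurableSet_Iic,
    inter_comm, Ioc_inter_Iic, Real.volume_Ioc, sub_zero, min_comm]

theorem map_cdfR_eq_volume_restrict (hξ : Continuous (cdfR ξ)) :
    ξ.map (cdfR ξ) = volume.restrict (Ioo 0 1) := by
  refine Measure.ext_of_Iic _ _ fun t ↦ ?_
  rw [Measure.map_apply hξ.measurable measurableSet_Iic, volume_restrict_Ioo_zero_one_Iic]
  exact measure_cdfR_le hξ t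

end Cdf

section Quantile

variable {ξ : Measure ℝ} {p t : ℝ}

-- The defining set is all of `ℝ` here, so `qf` takes the junk value of `sInf` rather than `-∞`.
lemma qf_of_nonpos (ξ : Measure ℝ) (hp : p ≤ 0) : qf ξ p = 0 := by
  have huniv : {s | p ≤ cdfR ξ s} = univ := eq_univ_of_forall fun s ↦ hp.trans (cdfR_nonneg ξ s)
  rw [qf, huniv, Real.sInf_univ]

lemma qf_nonneg (hξ : ξ (Iio 0) = 0) (p : ℝ) : 0 ≤ qf ξ p := by
  rcases le_or_gt p 0 with hp | hp
  · exact (qf_of_nonpos ξ hp).ge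
  · refine Real.sInf_nonneg fun s (hs : p ≤ cdfR ξ s) ↦ le_of_not_gt fun hs₀ ↦ ?_
    exact (hp.trans_le hs).ne' (cdfR_eq_zero_of_neg hξ hs₀)

variable [IsProbabilityMeasure ξ]

lemma qf_le_of_le_cdfR (hp : 0 < p) (h : p ≤ cdfR ξ t) : qf ξ p ≤ t := by
  obtain ⟨a, ha⟩ := exists_cdfR_lt ξ hp
  have hbdd : BddBelow {s | p ≤ cdfR ξ s} :=
    ⟨a, fun s hs ↦ ((monotone_cdfR ξ).reflect_lt (ha.trans_le hs)).le⟩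
  exact csInf_le hbdd h

lemma le_cdfR_of_qf_le (hp : p < 1) (h : qf ξ p ≤ t) : p ≤ cdfR ξ t := by
  have hne : {s | p ≤ cdfR ξ s}.Nonempty := (exists_lt_cdfR ξ hp).imp fun _ ↦ le_of_lt
  refine ge_of_tendsto (tendsto_cdfR_nhdsGT ξ t) ?_
  filter_upwards [self_mem_nhdsWithin] with u hu
  obtain ⟨v, hv, hvu⟩ := exists_lt_of_csInf_lt hne (lt_of_le_of_lt h hu)
  exact le_trans hv (monotone_cdfR ξ hvu.le)

lemma qf_le_iff (hp : p ∈ Ioo 0 1) : qf ξ p ≤ t ↔ p ≤ cdfR ξ t :=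
  ⟨le_cdfR_of_qf_le hp.2, qf_le_of_le_cdfR hp.1⟩

lemma monotoneOn_qf (ξ : Measure ℝ) [IsProbabilityMeasure ξ] : MonotoneOn (qf ξ) (Ioo 0 1) :=
  fun _ hp _ hq hpq ↦ qf_le_of_le_cdfR hp.1 (hpq.trans (le_cdfR_of_qf_le hq.2 le_rfl))

lemma aemeasurable_qf (ξ : Measure ℝ) [IsProbabilityMeasure ξ] :
    AEMeasurable (qf ξ) (volume.restrict (Ioo 0 1)) :=
  aemeasurable_restrict_of_monotoneOn measurableSet_Ioo (monotoneOn_qf ξ)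

theorem map_qf_volume_restrict (ξ : Measure ℝ) [IsProbabilityMeasure ξ] :
    (volume.restrict (Ioo 0 1)).map (qf ξ) = ξ := by
  refine Measure.ext_of_Iic _ _ fun t ↦ ?_
  have hpre : qf ξ ⁻¹' Iic t =ᵐ[volume.restrict (Ioo 0 1)] Iic (cdfR ξ t) := by
    filter_upwards [ae_restrict_mem measurableSet_Ioo] with p hp
    exact propext (qf_le_iff hp)
  rw [Measure.map_apply_of_aemeasurable (aemeasurable_qf ξ) measurableSet_Iic,
    measure_congr hpre, volume_restrict_Ioo_zero_one_Iic, min_eq_left (cdfR_le_one ξ t),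
    ofReal_cdfR]

end Quantile

/-- The monotone rearrangement `F_β⁻¹ ∘ F_α`, which transports `α` to `β` when `F_α` is continuous.
Where the quantile is infinite (`F_α = 0`, or `F_α = 1` not attained by `F_β`), its value is the
junk value `0` of `sInf`. -/
def monotoneRearrangement (α β : Measure ℝ) (s : ℝ) : ℝ :=
  qf β (cdfR α s)

section MonotoneRearrangement

variable {α β : Measure ℝ} {s : ℝ}

lemma monotoneRearrangement_nonneg (α : Measure ℝ) (hβ : β (Iio 0) = 0) (s : ℝ) :
    0 ≤ monotoneRearrangement α β s :=
  qf_nonneg hβ _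

lemma monotoneRearrangement_le_self [IsProbabilityMeasure β] (h : cdfR α s ≤ cdfR β s)
    (hs : 0 ≤ s) : monotoneRearrangement α β s ≤ s := by
  rcases le_or_gt (cdfR α s) 0 with h₀ | h₀
  · exact (qf_of_nonpos β h₀).trans_le hs
  · exact qf_le_of_le_cdfR h₀ h

variable [IsProbabilityMeasure α]

lemma aemeasurable_qf_map_cdfR (hα : Continuous (cdfR α)) (β : Measure ℝ)
    [IsProbabilityMeasure β] : AEMeasurable (qf β) (α.map (cdfR α)) :=
  map_cdfR_eq_volume_restrict hα ▸ aemeasurable_qf β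

lemma aemeasurable_monotoneRearrangement (hα : Continuous (cdfR α)) (β : Measure ℝ)
    [IsProbabilityMeasure β] : AEMeasurable (monotoneRearrangement α β) α :=
  (aemeasurable_qf_map_cdfR hα β).comp_measurable hα.measurable

theorem map_monotoneRearrangement (hα : Continuous (cdfR α)) (β : Measure ℝ)
    [IsProbabilityMeasure β] : α.map (monotoneRearrangement α β) = β :=
  calc α.map (monotoneRearrangement α β)
    _ = (α.map (cdfR α)).map (qf β) :=
      (AEMeasurable.map_map_of_aemeasurable (aemeasurable_qf_map_cdfR hα β) hα.aemeasurable).symm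
    _ = β := by rw [map_cdfR_eq_volume_restrict hα, map_qf_volume_restrict]

end MonotoneRearrangement

section Treaty

variable {n : ℕ} {μ : Measure (Vec n)} {η : Measure (Pt n)}

lemma measurableSet_treatySet (n : ℕ) : MeasurableSet (treatySet n) := by
  simp only [treatySet, ofPred_forall, ofPred_and]
  exact .iInter fun i ↦ (measurableSet_le measurable_const (by fun_prop)).inter
    (measurableSet_le (by fun_prop) (by fun_prop))

lemma isTreaty_map_prodMk [IsProbabilityMeasure μ] {f : Vec n → Vec n} (hf : AEMeasurable f μ)
    (hfμ : ∀ᵐ z ∂μ, ∀ i, 0 ≤ f z i ∧ f z i ≤ z i) :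
    IsTreaty n μ (μ.map fun z ↦ (z, f z)) := by
  have hgraph : AEMeasurable (fun z ↦ (z, f z)) μ := aemeasurable_id.prodMk hf
  have := Measure.isProbabilityMeasure_map hgraph
  refine ⟨this, ?_, ?_⟩
  · rw [AEMeasurable.map_map_of_aemeasurable measurable_fst.aemeasurable hgraph]
    exact Measure.map_id
  · rw [← mem_ae_iff_prob_eq_one (measurableSet_treatySet n)]
    exact (ae_map_iff hgraph (measurableSet_treatySet n)).2 hfμ

namespace IsTreaty

lemma isProbabilityMeasure (hη : IsTreaty n μ η) : IsProbabilityMeasure η :=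
  hη.1

lemma map_fst (hη : IsTreaty n μ η) : η.map Prod.fst = μ :=
  hη.2.1

lemma ae_mem_treatySet (hη : IsTreaty n μ η) : ∀ᵐ q ∂η, q ∈ treatySet n :=
  have := hη.isProbabilityMeasure
  (mem_ae_iff_prob_eq_one (measurableSet_treatySet n)).2 hη.2.2

lemma isProbabilityMeasure_fst (hη : IsTreaty n μ η) : IsProbabilityMeasure μ :=
  have := hη.isProbabilityMeasure
  hη.map_fst ▸ Measure.isProbabilityMeasure_map measurable_fst.aemeasurable

lemma ae_nonneg (hη : IsTreaty n μ η) : ∀ᵐ z ∂μ, ∀ i, 0 ≤ z i := by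
  have hmeas : MeasurableSet {z : Vec n | ∀ i, 0 ≤ z i} := by
    rw [ofPred_forall]
    exact .iInter fun i ↦ measurableSet_le measurable_const (measurable_pi_apply i)
  rw [← hη.map_fst, ae_map_iff measurable_fst.aemeasurable hmeas]
  filter_upwards [hη.ae_mem_treatySet] with q hq i using (hq i).1.trans (hq i).2

lemma map_snd_Iio_zero (hη : IsTreaty n μ η) (i : Fin n) :
    η.map (fun q ↦ q.2 i) (Iio 0) = 0 := by
  rw [Measure.map_apply (by fun_prop) measurableSet_Iio, measure_eq_zero_iff_ae_notMem]
  exact hη.ae_mem_treatySet.mono fun q hq ↦ (hq i).1.not_gt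

lemma cdfR_map_le (hη : IsTreaty n μ η) (i : Fin n) (s : ℝ) :
    cdfR (μ.map fun z ↦ z i) s ≤ cdfR (η.map fun q ↦ q.2 i) s := by
  have := hη.isProbabilityMeasure
  have hmarginal : μ.map (fun z ↦ z i) = η.map (fun q ↦ q.1 i) := by
    rw [← hη.map_fst, Measure.map_map (measurable_pi_apply i) measurable_fst]
    rfl
  rw [hmarginal]
  exact cdfR_map_le_of_ae_le (by fun_prop) (by fun_prop)
    (hη.ae_mem_treatySet.mono fun q hq ↦ (hq i).2) s

end IsTreaty

lemma aemeasurable_pi_comp_eval {f : Fin n → ℝ → ℝ}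
    (hf : ∀ i, AEMeasurable (f i) (μ.map fun z ↦ z i)) :
    AEMeasurable (fun z i ↦ f i (z i)) μ :=
  aemeasurable_pi_lambda _ fun i ↦ (hf i).comp_measurable (measurable_pi_apply i)

lemma map_snd_map_prodMk {f : Fin n → ℝ → ℝ}
    (hf : ∀ i, AEMeasurable (f i) (μ.map fun z ↦ z i)) (i : Fin n) :
    (μ.map fun z ↦ (z, fun j ↦ f j (z j))).map (fun q : Pt n ↦ q.2 i) =
      (μ.map fun z ↦ z i).map (f i) := by
  have hgraph : AEMeasurable (fun z ↦ (z, fun j ↦ f j (z j))) μ :=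
    aemeasurable_id.prodMk (aemeasurable_pi_comp_eval hf)
  rw [AEMeasurable.map_map_of_aemeasurable (by fun_prop) hgraph,
    AEMeasurable.map_map_of_aemeasurable (hf i) (measurable_pi_apply i).aemeasurable]
  rfl

end Treaty

theorem stmt12_general {n : ℕ} {μ : Measure (Vec n)}
    (R : ProbabilityMeasure (Pt n) → Fin n → ProbabilityMeasure ℝ)
    (hR : ∀ (η : ProbabilityMeasure (Pt n)) (i : Fin n),
      (R η i : Measure ℝ) = η.toMeasure.map fun q : Pt n ↦ q.2 i)
    (η : ProbabilityMeasure (Pt n)) (hη : IsTreaty n μ η.toMeasure)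
    (hcdf : ∀ i : Fin n, Continuous fun s : ℝ ↦ cdfR (μ.map fun z : Vec n ↦ z i) s)
    (Rf : Fin n → ℝ → ℝ)
    (hRf : ∀ (i : Fin n) (s : ℝ),
      Rf i s = qf (η.toMeasure.map fun q : Pt n ↦ q.2 i)
        (cdfR (μ.map fun z : Vec n ↦ z i) s)) :
    (∀ (i : Fin n) (s : ℝ), 0 ≤ s → 0 ≤ Rf i s ∧ Rf i s ≤ s) ∧
    ∃ ϑ : ProbabilityMeasure (Pt n),
      ϑ.toMeasure = μ.map (fun z : Vec n ↦ (z, fun i ↦ Rf i (z i))) ∧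
      IsTreaty n μ ϑ.toMeasure ∧ R ϑ = R η := by
  have hRf' (i : Fin n) : Rf i =
      monotoneRearrangement (μ.map fun z ↦ z i) (η.toMeasure.map fun q ↦ q.2 i) :=
    funext (hRf i)
  have := hη.isProbabilityMeasure_fst
  have hμi (i : Fin n) : IsProbabilityMeasure (μ.map fun z ↦ z i) :=
    Measure.isProbabilityMeasure_map (measurable_pi_apply i).aemeasurable
  have hηi (i : Fin n) : IsProbabilityMeasure (η.toMeasure.map fun q ↦ q.2 i) :=
    Measure.isProbabilityMeasure_map (by fun_prop)
  have hbounds (i : Fin n) (s : ℝ) (hs : 0 ≤ s) : 0 ≤ Rf i s ∧ Rf i s ≤ s :=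
    hRf' i ▸ ⟨monotoneRearrangement_nonneg _ (hη.map_snd_Iio_zero i) s,
      monotoneRearrangement_le_self (hη.cdfR_map_le i s) hs⟩
  have hmeas (i : Fin n) : AEMeasurable (Rf i) (μ.map fun z ↦ z i) :=
    hRf' i ▸ aemeasurable_monotoneRearrangement (hcdf i) _
  have htransport (i : Fin n) :
      (μ.map fun z ↦ z i).map (Rf i) = η.toMeasure.map fun q ↦ q.2 i :=
    hRf' i ▸ map_monotoneRearrangement (hcdf i) _
  have htreaty : IsTreaty n μ (μ.map fun z ↦ (z, fun i ↦ Rf i (z i))) :=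
    isTreaty_map_prodMk (aemeasurable_pi_comp_eval hmeas)
      (hη.ae_nonneg.mono fun z hz i ↦ hbounds i (z i) (hz i))
  refine ⟨hbounds, ⟨_, htreaty.isProbabilityMeasure⟩, rfl, htreaty, ?_⟩
  exact funext fun i ↦ Subtype.ext <|
    (hR _ i).trans <| (map_snd_map_prodMk hmeas i).trans <| (htransport i).trans (hR η i).symm

/-- if `𝒫 = ℱ ∘ ℛ` and `𝒮 = (𝒱 ∘ ℛ)⁻¹(E)` only depend on a
treaty through the marginal distributions of the reinsured components, `η*` is
optimal with `νᵢ* = π_{2,i}#η*`, and each marginal cdf `F_{μᵢ}` is continuous,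
then the deterministic treaty `ϑ = (Id, R₁ ∘ π₁, …, Rₙ ∘ πₙ)_#μ` built from the
monotone rearrangements `Rᵢ = F_{νᵢ*}⁻¹ ∘ F_{μᵢ}` is a reinsurance treaty
(in particular `0 ≤ Rᵢ(xᵢ) ≤ xᵢ`), has the same image `ℛ(ϑ) = ℛ(η*)`, is
admissible, and satisfies `𝒫(ϑ) = 𝒫(η*)`; hence a deterministic optimal
contract exists. -/
theorem stmt12 (n : ℕ) (μ : Measure (Vec n)) [IsProbabilityMeasure μ]
    {O : Type} [TopologicalSpace O]
    (F : (Fin n → ProbabilityMeasure ℝ) → ℝ)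
    (V : (Fin n → ProbabilityMeasure ℝ) → O)
    (E : Set O) (hE : IsClosed E)
    (R : ProbabilityMeasure (Pt n) → Fin n → ProbabilityMeasure ℝ)
    (hR : ∀ (η : ProbabilityMeasure (Pt n)) (i : Fin n),
      (R η i : Measure ℝ) = η.toMeasure.map fun q : Pt n => q.2 i)
    (hV : ContinuousOn V (Set.range R))
    (ηs : ProbabilityMeasure (Pt n))
    (hηs : IsTreaty n μ ηs.toMeasure) (hηsS : V (R ηs) ∈ E)
    (hopt : ∀ η : ProbabilityMeasure (Pt n),
      IsTreaty n μ η.toMeasure → V (R η) ∈ E → F (R ηs) ≤ F (R η))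
    (hcdf : ∀ i : Fin n, Continuous fun s : ℝ => cdfR (μ.map fun z : Vec n => z i) s)
    (Rf : Fin n → ℝ → ℝ)
    (hRf : ∀ (i : Fin n) (s : ℝ),
      Rf i s = qf (ηs.toMeasure.map fun q : Pt n => q.2 i)
        (cdfR (μ.map fun z : Vec n => z i) s)) :
    (∀ (i : Fin n) (s : ℝ), 0 ≤ s → 0 ≤ Rf i s ∧ Rf i s ≤ s) ∧
    ∃ ϑ : ProbabilityMeasure (Pt n),
      ϑ.toMeasure = μ.map (fun z : Vec n => (z, fun i => Rf i (z i))) ∧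
      IsTreaty n μ ϑ.toMeasure ∧
      R ϑ = R ηs ∧ V (R ϑ) ∈ E ∧ F (R ϑ) = F (R ηs) := by
  obtain ⟨hbounds, ϑ, hϑ, hϑtreaty, hRϑ⟩ := stmt12_general R hR ηs hηs hcdf Rf hRf
  exact ⟨hbounds, ϑ, hϑ, hϑtreaty, hRϑ, hRϑ ▸ hηsS, congrArg F hRϑ⟩
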